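/- For all smooth compactly supported φ : ℝ³ → ℂ^n, and t(r) := 1 for r ≤ R, t(r) := R/r for r ≥ R (R > 0 fixed): 0 ≤ ∫_{ℝ³} t(r) r |∂_r φ + φ/r|² d³x = ∫_{ℝ³} t(r) r |∂_r φ|² d³x − ∫_{ℝ³} t(r) |φ|²/r d³x − ∫_{ℝ³} t'(r) |φ|² d³x, and consequently ∫_{ℝ³} t(r) r |∂_r φ|² d³x − ∫_{ℝ³} |φ|²/r d³x ≥ −(1/R) ∫_{|x| ≥ R} |φ|² d³x. -/

import Mathlib

open MeasureTheory Real

noncomputable def tCut (R r : ℝ) : ℝ := if r ≤ R then 1 else R / r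

noncomputable def tCut' (R r : ℝ) : ℝ := if r ≤ R then 0 else -(R / r ^ 2)

noncomputable def radDeriv {n : ℕ} (φ : EuclideanSpace ℝ (Fin 3) → EuclideanSpace ℂ (Fin n))
    (x : EuclideanSpace ℝ (Fin 3)) : EuclideanSpace ℂ (Fin n) :=
  (‖x‖)⁻¹ • fderiv ℝ φ x x

/-! Expanding the square gives `r |∂_r φ + φ / r|² = r |∂_r φ|² + ∂_r |φ|² + |φ|² / r`. In polar
coordinates of a `d`-dimensional space, `∂_r (r ^ (d - 1) t |φ|²)` integrates to zero along every
ray, so `∫ t ∂_r |φ|² = -∫ t' |φ|² - (d - 1) ∫ t |φ|² / r`; for `d = 3` this is the identity. The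
bound then follows from the pointwise inequality `1 / r - 1_{r ≥ R} / R ≤ t / r + t'`. -/

section

open Set Module Filter Topology

theorem hasCompactSupport_norm_sq {X F : Type*} [TopologicalSpace X] [NormedAddCommGroup F]
    {f : X → F} (hf : HasCompactSupport f) : HasCompactSupport fun x => ‖f x‖ ^ 2 :=
  hf.comp_left (g := fun v => ‖v‖ ^ 2) (by simp)

section HalfLine

variable {F : Type*} [NormedAddCommGroup F] [NormedSpace ℝ F]

theorem integral_volumeIoiPow (n : ℕ) (f : ℝ → F) :
    ∫ r : Ioi (0 : ℝ), f r ∂(Measure.volumeIoiPow n) = ∫ r in Ioi (0 : ℝ), r ^ n • f r := by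
  simp only [Measure.volumeIoiPow, ENNReal.ofReal]
  rw [integral_withDensity_eq_integral_smul (measurable_subtype_coe.pow_const _).real_toNNReal,
    integral_subtype_comap measurableSet_Ioi fun r => (r ^ n).toNNReal • f r]
  refine setIntegral_congr_fun measurableSet_Ioi fun r (hr : 0 < r) => ?_
  simp only [NNReal.smul_def, Real.coe_toNNReal _ (pow_nonneg hr.le _)]

variable [CompleteSpace F]

theorem integral_Ioi_of_hasDerivAt_off_countable_of_tendsto {f f' : ℝ → F} {a : ℝ} {m : F}
    {s : Set ℝ} (hs : s.Countable) (hcont : ContinuousOn f (Ici a))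
    (hderiv : ∀ r ∈ Ioi a \ s, HasDerivAt f (f' r) r) (hint : IntegrableOn f' (Ioi a))
    (hlim : Tendsto f atTop (𝓝 m)) : ∫ r in Ioi a, f' r = m - f a := by
  refine tendsto_nhds_unique (intervalIntegral_tendsto_integral_Ioi a hint tendsto_id) ?_
  refine (hlim.sub_const (f a)).congr' ?_
  filter_upwards [eventually_ge_atTop a] with b hb
  refine (integral_eq_of_hasDerivAt_off_countable_of_le f f' hb hs
    (hcont.mono Icc_subset_Ici_self) (fun r hr => hderiv r ⟨hr.1.1, hr.2⟩) ?_).symm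
  exact (intervalIntegrable_iff_integrableOn_Ioc_of_le hb).2 (hint.mono_set Ioc_subset_Ioi_self)

variable {t t' : ℝ → ℝ} {s : Set ℝ} {g : ℝ → F} {k : ℕ}

theorem integral_Ioi_pow_smul_deriv_weight_smul (hk : k ≠ 0) (ht : Continuous t)
    (ht' : LocallyIntegrable t') (hs : s.Countable) (hderiv : ∀ r ∉ s, HasDerivAt t (t' r) r)
    (hg : ContDiff ℝ 1 g) (hgc : HasCompactSupport g) :
    ∫ r in Ioi (0 : ℝ), r ^ k • (t r • deriv g r + t' r • g r + (k * (t r / r)) • g r) = 0 := by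
  set u' : ℝ → F := fun r =>
    (r ^ k * t r) • deriv g r + ((r ^ k * t' r) • g r + (k * r ^ (k - 1) * t r) • g r)
  have hu : ∀ r ∉ s, HasDerivAt (fun r => (r ^ k * t r) • g r) (u' r) r := fun r hr => by
    refine (((hasDerivAt_pow k r).mul (hderiv r hr)).smul
      (hg.differentiable one_ne_zero r).hasDerivAt).congr_deriv ?_
    simp only [u', Pi.mul_apply]
    module
  have hu_int : Integrable u' := by
    refine .add ?_ (.add ?_ ?_)
    · have := hg.continuous_deriv le_rfl
      exact Continuous.integrable_of_hasCompactSupport (by fun_prop) hgc.deriv.smul_left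
    · exact (ht'.continuous_mul (by fun_prop)).integrable_smul_right_of_hasCompactSupport
        hg.continuous hgc
    · have := hg.continuous
      exact Continuous.integrable_of_hasCompactSupport (by fun_prop) hgc.smul_left
  have hlim : Tendsto (fun r => (r ^ k * t r) • g r) atTop (𝓝 0) :=
    (hgc.smul_left (f := fun r => r ^ k * t r)).is_zero_at_infty.mono_left atTop_le_cocompact
  have := hg.continuous
  calc ∫ r in Ioi (0 : ℝ), r ^ k • (t r • deriv g r + t' r • g r + (k * (t r / r)) • g r)
      = ∫ r in Ioi (0 : ℝ), u' r := by
        refine setIntegral_congr_fun measurableSet_Ioi fun r (hr : 0 < r) => ?_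
        have hpow : r ^ k * (k * (t r / r)) = k * r ^ (k - 1) * t r := by
          rw [← pow_sub_one_mul hk r]
          field_simp
        simp only [u', smul_add, smul_smul, hpow, add_assoc]
    _ = 0 - (0 ^ k * t 0) • g 0 :=
        integral_Ioi_of_hasDerivAt_off_countable_of_tendsto hs
          (Continuous.continuousOn (by fun_prop)) (fun r hr => hu r hr.2)
          hu_int.integrableOn hlim
    _ = 0 := by simp [hk]

end HalfLine

section PolarCoordinates

variable {E : Type*} [NormedAddCommGroup E] [NormedSpace ℝ E] [FiniteDimensional ℝ E]
  [Nontrivial E] [MeasurableSpace E] [BorelSpace E] {μ : Measure E} [μ.IsAddHaarMeasure]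
  {F : Type*} [NormedAddCommGroup F] [NormedSpace ℝ F]

theorem integral_eq_integral_toSphere_integral_Ioi {f : E → F} (hf : Integrable f μ) :
    ∫ x, f x ∂μ = ∫ ω : Metric.sphere (0 : E) 1,
      (∫ r in Ioi (0 : ℝ), r ^ (finrank ℝ E - 1) • f (r • ω.1)) ∂μ.toSphere := by
  have hmp := μ.measurePreserving_homeomorphUnitSphereProd
  have hemb := (homeomorphUnitSphereProd E).measurableEmbedding
  set h : Metric.sphere (0 : E) 1 × Ioi (0 : ℝ) → F := fun p => f (p.2.1 • p.1.1)
  have hcomp : h ∘ homeomorphUnitSphereProd E = fun x => f x.1 := by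
    ext x
    simp [h, smul_smul, norm_ne_zero_iff.2 x.2]
  have hint : Integrable h (μ.toSphere.prod (.volumeIoiPow (finrank ℝ E - 1))) := by
    rw [← hmp.integrable_comp_emb hemb, hcomp]
    exact (integrableOn_iff_comap_subtypeVal (measurableSet_singleton _).compl).1 hf.integrableOn
  calc ∫ x, f x ∂μ = ∫ x : ({0}ᶜ : Set E), f x ∂(μ.comap (↑)) := by
        rw [integral_subtype_comap (measurableSet_singleton _).compl f, restrict_compl_singleton]
    _ = ∫ p, h p ∂(μ.toSphere.prod (.volumeIoiPow (finrank ℝ E - 1))) := by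
        rw [← hmp.integral_comp hemb]
        exact integral_congr_ae (.of_forall fun x => (congrFun hcomp x).symm)
    _ = ∫ ω : Metric.sphere (0 : E) 1,
          (∫ r in Ioi (0 : ℝ), r ^ (finrank ℝ E - 1) • f (r • ω.1)) ∂μ.toSphere := by
        rw [integral_prod _ hint]
        exact integral_congr_ae (.of_forall fun ω => integral_volumeIoiPow _ fun r => f (r • ω.1))

theorem locallyIntegrable_comp_norm {w : ℝ → F}
    (hw : LocallyIntegrable fun r => r ^ (finrank ℝ E - 1) • w r) :
    LocallyIntegrable (fun x => w ‖x‖) μ := fun x => by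
  refine ⟨Metric.ball 0 (‖x‖ + 1), Metric.isOpen_ball.mem_nhds (by simp), ?_⟩
  rw [integrableOn_fun_norm_addHaar]
  exact (hw.integrableOn_isCompact isCompact_Icc).mono_set Ioo_subset_Icc_self

theorem integrable_comp_norm_smul {w : ℝ → ℝ} {f : E → F} (hw : LocallyIntegrable w)
    (hf : Continuous f) (hfc : HasCompactSupport f) : Integrable (fun x => w ‖x‖ • f x) μ := by
  refine LocallyIntegrable.integrable_smul_right_of_hasCompactSupport ?_ hf hfc
  exact locallyIntegrable_comp_norm (hw.continuous_smul (by fun_prop))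

end PolarCoordinates

section RadialDerivative

variable {E : Type*} [NormedAddCommGroup E] [NormedSpace ℝ E]

/-- The radial derivative `∂_r f = (x / r) · ∇f`, `r = ‖x‖`, of a function on a normed space. At the
origin, where it is undefined, its value is `0`. -/
noncomputable def radialDeriv {F : Type*} [NormedAddCommGroup F] [NormedSpace ℝ F] (f : E → F)
    (x : E) : F :=
  ‖x‖⁻¹ • fderiv ℝ f x x

theorem radialDeriv_smul_eq_deriv {F : Type*} [NormedAddCommGroup F] [NormedSpace ℝ F] {f : E → F}
    {ω : E} {r : ℝ} (hf : DifferentiableAt ℝ f (r • ω)) (hω : ‖ω‖ = 1) (hr : 0 < r) :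
    radialDeriv f (r • ω) = deriv (fun s : ℝ => f (s • ω)) r := by
  have hray : HasDerivAt (fun s : ℝ => s • ω) ω r := by
    simpa using (hasDerivAt_id r).smul_const ω
  have hcomp : HasDerivAt (fun s : ℝ => f (s • ω)) (fderiv ℝ f (r • ω) ω) r :=
    hf.hasFDerivAt.comp_hasDerivAt r hray
  rw [hcomp.deriv, radialDeriv, norm_smul, hω, mul_one, norm_of_nonneg hr.le, map_smul,
    inv_smul_smul₀ hr.ne']

theorem continuous_fderiv_apply_self {F : Type*} [NormedAddCommGroup F] [NormedSpace ℝ F]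
    {f : E → F} (hf : ContDiff ℝ 1 f) : Continuous fun x => fderiv ℝ f x x :=
  (hf.continuous_fderiv one_ne_zero).clm_apply continuous_id

theorem hasCompactSupport_fderiv_apply_self {F : Type*} [NormedAddCommGroup F]
    [NormedSpace ℝ F] {f : E → F} (hf : HasCompactSupport f) :
    HasCompactSupport fun x => fderiv ℝ f x x :=
  (hf.fderiv (𝕜 := ℝ)).mono fun x hx h => hx (by simp [h])

variable {F : Type*} [NormedAddCommGroup F] [InnerProductSpace ℝ F] {φ : E → F} {x : E}

theorem radialDeriv_norm_sq (hφ : DifferentiableAt ℝ φ x) :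
    radialDeriv (fun y => ‖φ y‖ ^ 2) x = 2 * inner ℝ (φ x) (radialDeriv φ x) := by
  simp only [radialDeriv, hφ.hasFDerivAt.norm_sq.fderiv, inner_smul_right]
  simp only [smul_apply, ContinuousLinearMap.comp_apply, coe_innerSL_apply, nsmul_eq_mul,
    Nat.cast_ofNat, smul_eq_mul]
  ring

theorem norm_mul_norm_radialDeriv_add_sq (hφ : DifferentiableAt ℝ φ x) :
    ‖x‖ * ‖radialDeriv φ x + ‖x‖⁻¹ • φ x‖ ^ 2 =
      ‖x‖ * ‖radialDeriv φ x‖ ^ 2 + radialDeriv (fun y => ‖φ y‖ ^ 2) x + ‖φ x‖ ^ 2 / ‖x‖ := by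
  rcases eq_or_ne x 0 with rfl | hx
  · simp [radialDeriv]
  have hx' : ‖x‖ ≠ 0 := norm_ne_zero_iff.2 hx
  rw [radialDeriv_norm_sq hφ, norm_add_sq_real, inner_smul_right, real_inner_comm, norm_smul,
    norm_inv, norm_norm]
  field_simp

end RadialDerivative

section WeightedIntegrals

variable {E : Type*} [NormedAddCommGroup E] [NormedSpace ℝ E] [FiniteDimensional ℝ E]
  [MeasurableSpace E] [BorelSpace E] {μ : Measure E} [μ.IsAddHaarMeasure]
  {t t' : ℝ → ℝ} {s : Set ℝ}

theorem locallyIntegrable_weight_div_norm (hE : 2 ≤ finrank ℝ E) (ht : Continuous t) :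
    LocallyIntegrable (fun x => t ‖x‖ / ‖x‖) μ := by
  have : Nontrivial E := nontrivial_of_finrank_pos (R := ℝ) (by lia)
  refine locallyIntegrable_comp_norm (w := fun r => t r / r) ?_
  have hcont : Continuous fun r : ℝ => r ^ (finrank ℝ E - 2) * t r := by fun_prop
  refine hcont.locallyIntegrable.congr ?_
  filter_upwards [Measure.ae_ne volume 0] with r hr
  rw [smul_eq_mul, show finrank ℝ E - 1 = finrank ℝ E - 2 + 1 by lia, pow_succ]
  field_simp

theorem integrable_weight_mul_norm_sq_div_norm {F : Type*} [NormedAddCommGroup F] {φ : E → F}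
    (hE : 2 ≤ finrank ℝ E) (ht : Continuous t) (hφ : Continuous φ) (hφc : HasCompactSupport φ) :
    Integrable (fun x => t ‖x‖ * ‖φ x‖ ^ 2 / ‖x‖) μ := by
  have hsq : Continuous fun x => ‖φ x‖ ^ 2 := hφ.norm.pow 2
  simpa only [smul_eq_mul, div_mul_eq_mul_div] using
    (locallyIntegrable_weight_div_norm (μ := μ) hE ht).integrable_smul_right_of_hasCompactSupport
      hsq (hasCompactSupport_norm_sq hφc)

section Divergence

variable {F : Type*} [NormedAddCommGroup F] [NormedSpace ℝ F] {f : E → F}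

theorem integrable_weight_smul_radialDeriv (hE : 2 ≤ finrank ℝ E) (ht : Continuous t)
    (hf : ContDiff ℝ 1 f) (hfc : HasCompactSupport f) :
    Integrable (fun x => t ‖x‖ • radialDeriv f x) μ := by
  refine ((locallyIntegrable_weight_div_norm hE ht).integrable_smul_right_of_hasCompactSupport
    (continuous_fderiv_apply_self hf) (hasCompactSupport_fderiv_apply_self hfc)).congr
    (.of_forall fun x => ?_)
  simp only [radialDeriv, smul_smul, div_eq_mul_inv]

theorem integral_weight_smul_radialDeriv [CompleteSpace F] (hE : 2 ≤ finrank ℝ E)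
    (ht : Continuous t) (ht' : LocallyIntegrable t') (hs : s.Countable)
    (hderiv : ∀ r ∉ s, HasDerivAt t (t' r) r) (hf : ContDiff ℝ 1 f) (hfc : HasCompactSupport f) :
    ∫ x, t ‖x‖ • radialDeriv f x ∂μ =
      -(∫ x, t' ‖x‖ • f x ∂μ) - (finrank ℝ E - 1 : ℝ) • ∫ x, (t ‖x‖ / ‖x‖) • f x ∂μ := by
  have : Nontrivial E := nontrivial_of_finrank_pos (R := ℝ) (by lia)
  have hrad := integrable_weight_smul_radialDeriv (μ := μ) hE ht hf hfc
  have hdiv := (locallyIntegrable_weight_div_norm (μ := μ)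
    hE ht).integrable_smul_right_of_hasCompactSupport hf.continuous hfc
  have hder := integrable_comp_norm_smul (μ := μ) ht' hf.continuous hfc
  have hzero : ∫ x, (t ‖x‖ • radialDeriv f x + t' ‖x‖ • f x +
      (finrank ℝ E - 1 : ℝ) • (t ‖x‖ / ‖x‖) • f x) ∂μ = 0 := by
    rw [integral_eq_integral_toSphere_integral_Ioi ((hrad.fun_add hder).fun_add (hdiv.fun_smul _))]
    refine integral_eq_zero_of_ae (.of_forall fun ω => ?_)
    have hω : ‖ω.1‖ = 1 := by simp
    have hω0 : ω.1 ≠ 0 := norm_ne_zero_iff.1 (by simp)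
    rw [Pi.zero_apply, ← integral_Ioi_pow_smul_deriv_weight_smul (k := finrank ℝ E - 1)
      (g := fun r => f (r • ω.1)) (by lia) ht ht' hs hderiv (by fun_prop)
      (hfc.comp_isClosedEmbedding (isClosedEmbedding_smul_left hω0))]
    refine setIntegral_congr_fun measurableSet_Ioi fun r (hr : 0 < r) => ?_
    simp only [radialDeriv_smul_eq_deriv (hf.differentiable one_ne_zero _) hω hr, norm_smul, hω,
      mul_one, norm_of_nonneg hr.le, smul_smul, Nat.cast_pred (show 0 < finrank ℝ E by lia)]
  rw [integral_add (hrad.fun_add hder) (hdiv.fun_smul _), integral_add hrad hder,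
    integral_smul] at hzero
  rw [← sub_eq_zero, ← hzero]
  abel

end Divergence

section NormSq

variable {F : Type*} [NormedAddCommGroup F] [InnerProductSpace ℝ F] {φ : E → F}

theorem integrable_weight_mul_norm_mul_norm_radialDeriv_sq (hE : 2 ≤ finrank ℝ E)
    (ht : Continuous t) (hφ : ContDiff ℝ 1 φ) (hφc : HasCompactSupport φ) :
    Integrable (fun x => t ‖x‖ * ‖x‖ * ‖radialDeriv φ x‖ ^ 2) μ := by
  have hsq : Continuous fun x => ‖fderiv ℝ φ x x‖ ^ 2 :=
    (continuous_fderiv_apply_self hφ).norm.pow 2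
  refine ((locallyIntegrable_weight_div_norm hE ht).integrable_smul_right_of_hasCompactSupport
    hsq (hasCompactSupport_norm_sq (hasCompactSupport_fderiv_apply_self hφc))).congr
    (.of_forall fun x => ?_)
  simp only [radialDeriv, norm_smul, norm_inv, norm_norm, mul_pow, smul_eq_mul]
  field_simp

theorem integral_weight_mul_norm_radialDeriv_add_sq (hE : 2 ≤ finrank ℝ E) (ht : Continuous t)
    (ht' : LocallyIntegrable t') (hs : s.Countable) (hderiv : ∀ r ∉ s, HasDerivAt t (t' r) r)
    (hφ : ContDiff ℝ 1 φ) (hφc : HasCompactSupport φ) :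
    ∫ x, t ‖x‖ * ‖x‖ * ‖radialDeriv φ x + ‖x‖⁻¹ • φ x‖ ^ 2 ∂μ =
      ∫ x, t ‖x‖ * ‖x‖ * ‖radialDeriv φ x‖ ^ 2 ∂μ -
        (finrank ℝ E - 2) * ∫ x, t ‖x‖ * ‖φ x‖ ^ 2 / ‖x‖ ∂μ - ∫ x, t' ‖x‖ * ‖φ x‖ ^ 2 ∂μ := by
  have hsq : ContDiff ℝ 1 fun x => ‖φ x‖ ^ 2 := hφ.norm_sq ℝ
  have hsqc : HasCompactSupport fun x => ‖φ x‖ ^ 2 := hasCompactSupport_norm_sq hφc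
  have hkin := integrable_weight_mul_norm_mul_norm_radialDeriv_sq (μ := μ) hE ht hφ hφc
  have hcross := integrable_weight_smul_radialDeriv (μ := μ) hE ht hsq hsqc
  have hdiv := integrable_weight_mul_norm_sq_div_norm (μ := μ) hE ht hφ.continuous hφc
  have hparts := integral_weight_smul_radialDeriv (μ := μ) hE ht ht' hs hderiv hsq hsqc
  simp only [smul_eq_mul, div_mul_eq_mul_div] at hcross hparts
  calc ∫ x, t ‖x‖ * ‖x‖ * ‖radialDeriv φ x + ‖x‖⁻¹ • φ x‖ ^ 2 ∂μ
      = ∫ x, (t ‖x‖ * ‖x‖ * ‖radialDeriv φ x‖ ^ 2 +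
          t ‖x‖ * radialDeriv (fun y => ‖φ y‖ ^ 2) x + t ‖x‖ * ‖φ x‖ ^ 2 / ‖x‖) ∂μ := by
        refine integral_congr_ae (.of_forall fun x => ?_)
        simp only [mul_assoc,
          norm_mul_norm_radialDeriv_add_sq (hφ.differentiable one_ne_zero x)]
        ring
    _ = ∫ x, t ‖x‖ * ‖x‖ * ‖radialDeriv φ x‖ ^ 2 ∂μ +
          ∫ x, t ‖x‖ * radialDeriv (fun y => ‖φ y‖ ^ 2) x ∂μ +
          ∫ x, t ‖x‖ * ‖φ x‖ ^ 2 / ‖x‖ ∂μ := by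
        rw [integral_add (hkin.fun_add hcross) hdiv, integral_add hkin hcross]
    _ = ∫ x, t ‖x‖ * ‖x‖ * ‖radialDeriv φ x‖ ^ 2 ∂μ -
          (finrank ℝ E - 2) * ∫ x, t ‖x‖ * ‖φ x‖ ^ 2 / ‖x‖ ∂μ -
          ∫ x, t' ‖x‖ * ‖φ x‖ ^ 2 ∂μ := by
        rw [hparts]
        ring

end NormSq

end WeightedIntegrals

section Cutoff

variable {R : ℝ}

theorem tCut_eq_div_max (hR : R ≠ 0) (r : ℝ) : tCut R r = R / max R r := by
  rcases le_or_gt r R with hr | hr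
  · rw [tCut, if_pos hr, max_eq_left hr, div_self hR]
  · rw [tCut, if_neg hr.not_ge, max_eq_right hr.le]

theorem continuous_tCut (hR : 0 < R) : Continuous (tCut R) := by
  simp only [funext (tCut_eq_div_max hR.ne')]
  exact continuous_const.div (by fun_prop) fun r => (lt_max_of_lt_left hR).ne'

theorem hasDerivAt_tCut (hR : 0 < R) {r : ℝ} (hr : r ≠ R) :
    HasDerivAt (tCut R) (tCut' R r) r := by
  rcases hr.lt_or_gt with hlt | hgt
  · rw [tCut', if_pos hlt.le]
    refine (hasDerivAt_const r (1 : ℝ)).congr_of_eventuallyEq ?_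
    filter_upwards [Iio_mem_nhds hlt] with y hy using if_pos (le_of_lt hy)
  · rw [tCut', if_neg hgt.not_ge]
    have hinv := (hasDerivAt_inv (hR.trans hgt).ne').const_mul R
    refine (hinv.congr_deriv (by ring)).congr_of_eventuallyEq ?_
    filter_upwards [Ioi_mem_nhds hgt] with y hy
    rw [tCut, if_neg (not_le.2 hy), div_eq_mul_inv]

theorem tCut_nonneg (hR : 0 ≤ R) (r : ℝ) : 0 ≤ tCut R r := by
  unfold tCut
  split_ifs with hr
  · exact zero_le_one
  · exact div_nonneg hR (hR.trans (not_le.1 hr).le)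

theorem abs_tCut'_le (hR : 0 < R) (r : ℝ) : |tCut' R r| ≤ 1 / R := by
  unfold tCut'
  split_ifs with hr
  · simpa using hR.le
  · have hr : R < r := not_le.1 hr
    rw [abs_neg, abs_of_nonneg (by positivity), div_le_div_iff₀ (pow_pos (hR.trans hr) 2) hR]
    nlinarith

theorem locallyIntegrable_tCut' (hR : 0 < R) : LocallyIntegrable (tCut' R) := by
  have hmeas : Measurable (tCut' R) :=
    Measurable.ite measurableSet_Iic measurable_const (by fun_prop)
  refine (locallyIntegrable_const (1 / R)).mono hmeas.aestronglyMeasurable (.of_forall fun r => ?_)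
  rw [Real.norm_eq_abs, Real.norm_of_nonneg (by positivity)]
  exact abs_tCut'_le hR r

theorem div_sub_indicator_le_mul_tCut_div_add_tCut' (hR : 0 < R) {c : ℝ} (hc : 1 ≤ c) (r : ℝ) :
    c / r - c / R * (Ici R).indicator 1 r ≤ c * (tCut R r / r) + tCut' R r := by
  rcases le_or_gt r R with hr | hr
  · have hind : 0 ≤ c / R * (Ici R).indicator 1 r :=
      mul_nonneg (by positivity) (indicator_nonneg (fun _ _ => zero_le_one) r)
    rw [tCut, tCut', if_pos hr, if_pos hr, mul_one_div, add_zero]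
    exact sub_le_self _ hind
  · have hr0 : 0 < r := hR.trans hr
    rw [tCut, tCut', if_neg hr.not_ge, if_neg hr.not_ge, indicator_of_mem (mem_Ici.2 hr.le),
      Pi.one_apply, mul_one]
    calc c / r - c / R ≤ 0 := sub_nonpos.2 (by gcongr)
      _ ≤ (c - 1) * (R / r ^ 2) := mul_nonneg (sub_nonneg.2 hc) (by positivity)
      _ = c * (R / r / r) + -(R / r ^ 2) := by ring

variable {E : Type*} [NormedAddCommGroup E] [NormedSpace ℝ E] [FiniteDimensional ℝ E]
  [MeasurableSpace E] [BorelSpace E] (μ : Measure E) [μ.IsAddHaarMeasure]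

theorem integral_norm_sq_div_norm_sub_le {F : Type*} [NormedAddCommGroup F] {φ : E → F}
    (hE : 2 ≤ finrank ℝ E) (hR : 0 < R) {c : ℝ} (hc : 1 ≤ c) (hφ : Continuous φ)
    (hφc : HasCompactSupport φ) :
    c * ∫ x, ‖φ x‖ ^ 2 / ‖x‖ ∂μ - c / R * ∫ x in {x | R ≤ ‖x‖}, ‖φ x‖ ^ 2 ∂μ ≤
      c * ∫ x, tCut R ‖x‖ * ‖φ x‖ ^ 2 / ‖x‖ ∂μ + ∫ x, tCut' R ‖x‖ * ‖φ x‖ ^ 2 ∂μ := by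
  have : Nontrivial E := nontrivial_of_finrank_pos (R := ℝ) (by lia)
  have hsq : Continuous fun x => ‖φ x‖ ^ 2 := hφ.norm.pow 2
  have hsqc := hasCompactSupport_norm_sq hφc
  have hS : MeasurableSet {x : E | R ≤ ‖x‖} := measurableSet_le measurable_const measurable_norm
  have hcoul := (integrable_weight_mul_norm_sq_div_norm (t := 1) (μ := μ) hE continuous_const
    hφ hφc).const_mul c
  have htail := ((hsq.integrable_of_hasCompactSupport (μ := μ) hsqc).indicator hS).const_mul (c / R)
  have hdiv := (integrable_weight_mul_norm_sq_div_norm (μ := μ) hE (continuous_tCut hR)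
    hφ hφc).const_mul c
  have hder := integrable_comp_norm_smul (μ := μ) (locallyIntegrable_tCut' hR) hsq hsqc
  simp only [Pi.one_apply, one_mul] at hcoul
  simp only [smul_eq_mul] at hder
  rw [← integral_indicator hS]
  simp only [← integral_const_mul]
  rw [← integral_sub hcoul htail, ← integral_add hdiv hder]
  refine integral_mono (hcoul.sub htail) (hdiv.add hder) fun x => ?_
  have hpt := mul_le_mul_of_nonneg_right
    (div_sub_indicator_le_mul_tCut_div_add_tCut' hR hc ‖x‖) (sq_nonneg ‖φ x‖)
  have hind : {x : E | R ≤ ‖x‖}.indicator (fun x => ‖φ x‖ ^ 2) x =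
      (Ici R).indicator 1 ‖x‖ * ‖φ x‖ ^ 2 := by
    by_cases hx : R ≤ ‖x‖ <;> simp [hx]
  simp only [hind]
  convert hpt using 1 <;> ring

theorem cutoff_radial_identity_and_bound_general {F : Type*} [NormedAddCommGroup F]
    [InnerProductSpace ℝ F] {φ : E → F} (hE : 3 ≤ finrank ℝ E)
    (hφ : ContDiff ℝ 1 φ) (hφc : HasCompactSupport φ) (hR : 0 < R) :
    0 ≤ ∫ x, tCut R ‖x‖ * ‖x‖ * ‖radialDeriv φ x + ‖x‖⁻¹ • φ x‖ ^ 2 ∂μ ∧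
    ∫ x, tCut R ‖x‖ * ‖x‖ * ‖radialDeriv φ x + ‖x‖⁻¹ • φ x‖ ^ 2 ∂μ =
      ∫ x, tCut R ‖x‖ * ‖x‖ * ‖radialDeriv φ x‖ ^ 2 ∂μ -
      (finrank ℝ E - 2) * ∫ x, tCut R ‖x‖ * ‖φ x‖ ^ 2 / ‖x‖ ∂μ -
      ∫ x, tCut' R ‖x‖ * ‖φ x‖ ^ 2 ∂μ ∧
    -((finrank ℝ E - 2) / R) * ∫ x in {x | R ≤ ‖x‖}, ‖φ x‖ ^ 2 ∂μ ≤
      ∫ x, tCut R ‖x‖ * ‖x‖ * ‖radialDeriv φ x‖ ^ 2 ∂μ -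
      (finrank ℝ E - 2) * ∫ x, ‖φ x‖ ^ 2 / ‖x‖ ∂μ := by
  have hnonneg : 0 ≤ ∫ x, tCut R ‖x‖ * ‖x‖ * ‖radialDeriv φ x + ‖x‖⁻¹ • φ x‖ ^ 2 ∂μ :=
    integral_nonneg fun x =>
      mul_nonneg (mul_nonneg (tCut_nonneg hR.le ‖x‖) (norm_nonneg x)) (sq_nonneg _)
  have hidentity := integral_weight_mul_norm_radialDeriv_add_sq (μ := μ) (by lia)
    (continuous_tCut hR) (locallyIntegrable_tCut' hR) (countable_singleton R)
    (fun r hr => hasDerivAt_tCut hR hr) hφ hφc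
  have hdim : (3 : ℝ) ≤ finrank ℝ E := by exact_mod_cast hE
  have hbound := integral_norm_sq_div_norm_sub_le μ (c := finrank ℝ E - 2) (by lia) hR
    (by linarith) hφ.continuous hφc
  exact ⟨hnonneg, hidentity, by linarith⟩

theorem radDeriv_eq_radialDeriv {n : ℕ} (φ : EuclideanSpace ℝ (Fin 3) → EuclideanSpace ℂ (Fin n)) :
    radDeriv φ = radialDeriv φ :=
  rfl

end Cutoff

end

theorem cutoff_radial_identity_and_bound {n : ℕ}
    (φ : EuclideanSpace ℝ (Fin 3) → EuclideanSpace ℂ (Fin n))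
    (hs : ContDiff ℝ (⊤ : ℕ∞) φ) (hc : HasCompactSupport φ) (R : ℝ) (hR : 0 < R) :
    (0 ≤ ∫ x : EuclideanSpace ℝ (Fin 3),
        tCut R ‖x‖ * ‖x‖ * ‖radDeriv φ x + (‖x‖)⁻¹ • φ x‖ ^ 2) ∧
    ((∫ x : EuclideanSpace ℝ (Fin 3),
        tCut R ‖x‖ * ‖x‖ * ‖radDeriv φ x + (‖x‖)⁻¹ • φ x‖ ^ 2) =
      (∫ x : EuclideanSpace ℝ (Fin 3), tCut R ‖x‖ * ‖x‖ * ‖radDeriv φ x‖ ^ 2) -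
      (∫ x : EuclideanSpace ℝ (Fin 3), tCut R ‖x‖ * ‖φ x‖ ^ 2 / ‖x‖) -
      (∫ x : EuclideanSpace ℝ (Fin 3), tCut' R ‖x‖ * ‖φ x‖ ^ 2)) ∧
    (-(1 / R) * ∫ x in {x : EuclideanSpace ℝ (Fin 3) | R ≤ ‖x‖}, ‖φ x‖ ^ 2) ≤
      (∫ x : EuclideanSpace ℝ (Fin 3), tCut R ‖x‖ * ‖x‖ * ‖radDeriv φ x‖ ^ 2) -
      (∫ x : EuclideanSpace ℝ (Fin 3), ‖φ x‖ ^ 2 / ‖x‖) := by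
  have hdim : (Module.finrank ℝ (EuclideanSpace ℝ (Fin 3)) : ℝ) - 2 = 1 := by norm_num
  simpa only [hdim, one_mul, radDeriv_eq_radialDeriv] using
    cutoff_radial_identity_and_bound_general volume (by simp) (hs.of_le (by simp)) hc hR
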